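/- Let x* = A⁻¹b be the exact solution of Ax = b. Then for all 1 ≤ k ≤ ℓ, the cAr (equivalently MinAres) iterates satisfy (x* − x_k)ᵀA(x* − x_k) ≤ (x* − x_{k−1})ᵀA(x* − x_{k−1}) (the energy-norm errors ‖x* − x_k‖_A decrease monotonically) and ‖r_k‖ ≤ ‖r_{k−1}‖ (the residual norms decrease monotonically). -/

import Mathlib

open Matrix

/-!
cAr is the method of conjugate gradients run in the semi-inner product `⟪A³u, v⟫`; running it in
`⟪Aᵐu, v⟫` gives CG for `m = 0` and CR for `m = 1`, and the argument is the same for every `m`.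
Conjugacy of the search directions says `⟪Aᵐ⁺¹pᵢ, pⱼ⟫ = 0` for `i ≠ j`, so these numbers are all
nonnegative. Because `r_ℓ = 0`, each residual `rᵢ` is a nonnegative combination of
`A pᵢ, …, A p_{ℓ-1}`, and each `pᵢ` is a nonnegative combination of `r₀, …, rᵢ`. Hence
nonnegativity of `⟪Aˢ⁺¹pᵢ, pⱼ⟫` for all `i, j` implies that of `⟪Aˢrᵢ, pⱼ⟫` and of `⟪Aˢpᵢ, pⱼ⟫`, and
one descends from `s = m` to `s = 0`. The exponent `s = 0` yields the decrease of the energy-norm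
error and `s = 1`, available once `1 ≤ m`, the decrease of the residual norm.
-/

section Operators

variable {𝕜 E : Type*} [RCLike 𝕜] [NormedAddCommGroup E]

theorem isPositive_pow [InnerProductSpace 𝕜 E] {T : E →ₗ[𝕜] E} (hT : T.IsPositive) :
    ∀ m : ℕ, (T ^ m).IsPositive
  | 0 => LinearMap.isPositive_one
  | 1 => by simpa only [pow_one] using hT
  | m + 2 => by
    refine ⟨hT.isSymmetric.pow _, fun u ↦ ?_⟩
    rw [pow_succ, pow_succ', Module.End.mul_apply, Module.End.mul_apply, hT.isSymmetric]
    exact (isPositive_pow hT m).re_inner_nonneg_left (T u)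

theorem apply_eq_zero_of_pow_succ_apply_eq_zero [InnerProductSpace 𝕜 E] {T : E →ₗ[𝕜] E}
    (hT : T.IsSymmetric) {m : ℕ} {u : E} (hu : (T ^ (m + 1)) u = 0) : T u = 0 := by
  induction m with
  | zero => simpa only [zero_add, pow_one] using hu
  | succ m ih =>
    apply ih
    rw [pow_succ', Module.End.mul_apply, pow_succ', Module.End.mul_apply] at hu
    rw [pow_succ', Module.End.mul_apply, ← inner_self_eq_zero (𝕜 := 𝕜), ← hT, hu,
      inner_zero_left]

variable [InnerProductSpace ℝ E]

open scoped RealInnerProductSpace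

theorem apply_eq_zero_of_inner_apply_self_eq_zero {T : E →ₗ[ℝ] E} (hT : T.IsPositive) {u : E}
    (hu : ⟪T u, u⟫ = 0) : T u = 0 := by
  let B : LinearMap.BilinForm ℝ E := innerₗ E ∘ₗ T
  have hB : LinearMap.IsSymm B := ⟨fun v w ↦ (hT.isSymmetric v w).trans (real_inner_comm _ _)⟩
  have hBu : B u = 0 := LinearMap.mem_ker.mp
    ((B.apply_apply_same_eq_zero_iff hT.inner_nonneg_left hB).mp hu)
  exact inner_self_eq_zero.mp (LinearMap.congr_fun hBu (T u))

theorem inner_apply_self_le_inner_apply_add_self {T : E →ₗ[ℝ] E} (hT : T.IsPositive) {u v : E}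
    (huv : 0 ≤ ⟪T u, v⟫) : ⟪T u, u⟫ ≤ ⟪T (u + v), u + v⟫ := by
  have hvu : ⟪T v, u⟫ = ⟪T u, v⟫ := by rw [hT.isSymmetric, real_inner_comm]
  have hv : 0 ≤ ⟪T v, v⟫ := hT.inner_nonneg_left v
  rw [map_add, inner_add_left, inner_add_right, inner_add_right]
  linarith

end Operators

section PowConjGrad

open scoped RealInnerProductSpace

variable {E : Type*} [NormedAddCommGroup E] [InnerProductSpace ℝ E]

/-- The sequences `x`, `r`, `p` (iterates, residuals, search directions) and `ρ`, `α`, `β`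
(coefficients) are a run of the conjugate gradient method for `T x = b` in the semi-inner product
`⟪T ^ m u, v⟫`, from an arbitrary starting point `x 0`. The exponents `m = 0, 1, 3` are the methods
CG, CR and cAr; in cAr the denominator of `α` is `⟪T ^ 4 p, p⟫ = ‖T ^ 2 p‖ ^ 2`. -/
structure IsPowConjGrad (T : E →ₗ[ℝ] E) (m : ℕ) (b : E) (x r p : ℕ → E) (ρ α β : ℕ → ℝ) :
    Prop where
  residual_zero : r 0 = b - T (x 0)
  direction_zero : p 0 = r 0
  rho_eq : ∀ k, ρ k = ⟪(T ^ m) (r k), r k⟫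
  alpha_eq : ∀ k, α k = ρ k / ⟪(T ^ (m + 1)) (p k), p k⟫
  iterate_succ : ∀ k, x (k + 1) = x k + α k • p k
  residual_succ : ∀ k, r (k + 1) = r k - α k • T (p k)
  beta_eq : ∀ k, β k = ρ (k + 1) / ρ k
  direction_succ : ∀ k, p (k + 1) = r (k + 1) + β k • p k

namespace IsPowConjGrad

variable {T : E →ₗ[ℝ] E} {m : ℕ} {b xstar : E} {x r p : ℕ → E} {ρ α β : ℕ → ℝ} {k ℓ : ℕ}

theorem residual_eq (h : IsPowConjGrad T m b x r p ρ α β) (hxstar : T xstar = b) (k : ℕ) :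
    r k = T (xstar - x k) := by
  induction k with
  | zero => rw [h.residual_zero, map_sub, hxstar]
  | succ k ih =>
    rw [h.residual_succ, ih, h.iterate_succ, ← sub_sub, map_sub T _ (α k • p k), map_smul]

theorem inner_pow_residual_succ (h : IsPowConjGrad T m b x r p ρ α β) (s k : ℕ) (v : E) :
    ⟪(T ^ s) (r (k + 1)), v⟫ = ⟪(T ^ s) (r k), v⟫ - α k * ⟪(T ^ (s + 1)) (p k), v⟫ := by
  rw [h.residual_succ, map_sub, map_smul, inner_sub_left, real_inner_smul_left, pow_succ,
    Module.End.mul_apply]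

theorem inner_pow_direction_succ (h : IsPowConjGrad T m b x r p ρ α β) (s k : ℕ) (v : E) :
    ⟪(T ^ s) (p (k + 1)), v⟫ = ⟪(T ^ s) (r (k + 1)), v⟫ + β k * ⟪(T ^ s) (p k), v⟫ := by
  rw [h.direction_succ, map_add, map_smul, inner_add_left, real_inner_smul_left]

theorem rho_nonneg (h : IsPowConjGrad T m b x r p ρ α β) (hT : T.IsPositive) (k : ℕ) :
    0 ≤ ρ k := by
  rw [h.rho_eq]
  exact (isPositive_pow hT m).inner_nonneg_left _

theorem alpha_nonneg (h : IsPowConjGrad T m b x r p ρ α β) (hT : T.IsPositive) (k : ℕ) :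
    0 ≤ α k := by
  rw [h.alpha_eq]
  exact div_nonneg (h.rho_nonneg hT k) ((isPositive_pow hT _).inner_nonneg_left _)

theorem beta_nonneg (h : IsPowConjGrad T m b x r p ρ α β) (hT : T.IsPositive) (k : ℕ) :
    0 ≤ β k := by
  rw [h.beta_eq]
  exact div_nonneg (h.rho_nonneg hT _) (h.rho_nonneg hT k)

theorem rho_ne_zero (h : IsPowConjGrad T m b x r p ρ α β) (hT : T.IsPositive)
    (hxstar : T xstar = b) (hk : r k ≠ 0) : ρ k ≠ 0 := by
  contrapose hk
  rw [h.rho_eq] at hk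
  have hTr : (T ^ m) (r k) = 0 :=
    apply_eq_zero_of_inner_apply_self_eq_zero (isPositive_pow hT m) hk
  rw [h.residual_eq hxstar, ← Module.End.mul_apply, ← pow_succ] at hTr
  rw [h.residual_eq hxstar, apply_eq_zero_of_pow_succ_apply_eq_zero hT.isSymmetric hTr]

theorem inner_pow_residual_direction_self (h : IsPowConjGrad T m b x r p ρ α β)
    (horth : ∀ j < k, ⟪(T ^ m) (r k), p j⟫ = 0) : ⟪(T ^ m) (r k), p k⟫ = ρ k := by
  cases k with
  | zero => rw [h.direction_zero, h.rho_eq]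
  | succ k =>
    rw [h.direction_succ, inner_add_right, real_inner_smul_right, horth k k.lt_succ_self,
      mul_zero, add_zero, h.rho_eq]

theorem inner_pow_succ_direction_self_ne_zero (h : IsPowConjGrad T m b x r p ρ α β)
    (hT : T.IsPositive) (hxstar : T xstar = b) (hk : r k ≠ 0)
    (horth : ∀ j < k, ⟪(T ^ m) (r k), p j⟫ = 0) : ⟪(T ^ (m + 1)) (p k), p k⟫ ≠ 0 := by
  intro hp
  have hTp : (T ^ (m + 1)) (p k) = 0 :=
    apply_eq_zero_of_inner_apply_self_eq_zero (isPositive_pow hT _) hp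
  apply h.rho_ne_zero hT hxstar hk
  calc ρ k = ⟪(T ^ m) (r k), p k⟫ := (h.inner_pow_residual_direction_self horth).symm
    _ = ⟪(T ^ (m + 1)) (xstar - x k), p k⟫ := by
      rw [h.residual_eq hxstar, pow_succ, Module.End.mul_apply]
    _ = 0 := by rw [hT.isSymmetric.pow, hTp, inner_zero_right]

theorem alpha_mul_inner_direction_self (h : IsPowConjGrad T m b x r p ρ α β)
    (hT : T.IsPositive) (hxstar : T xstar = b) (hk : r k ≠ 0)
    (horth : ∀ j < k, ⟪(T ^ m) (r k), p j⟫ = 0) :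
    α k * ⟪(T ^ (m + 1)) (p k), p k⟫ = ρ k := by
  rw [h.alpha_eq]
  exact div_mul_cancel₀ _ (h.inner_pow_succ_direction_self_ne_zero hT hxstar hk horth)

theorem inner_pow_residual_succ_direction_eq_zero (h : IsPowConjGrad T m b x r p ρ α β)
    (hT : T.IsPositive) (hxstar : T xstar = b) (hk : r k ≠ 0)
    (horth : ∀ j < k, ⟪(T ^ m) (r k), p j⟫ = 0)
    (hconj : ∀ j < k, ⟪(T ^ (m + 1)) (p k), p j⟫ = 0) :
    ∀ j < k + 1, ⟪(T ^ m) (r (k + 1)), p j⟫ = 0 := by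
  intro j hj
  rw [h.inner_pow_residual_succ]
  rcases Nat.lt_succ_iff_lt_or_eq.mp hj with hj | rfl
  · rw [horth j hj, hconj j hj, mul_zero, sub_zero]
  · rw [h.inner_pow_residual_direction_self horth,
      h.alpha_mul_inner_direction_self hT hxstar hk horth, sub_self]

theorem inner_residual_eq_zero_of_inner_direction_eq_zero (h : IsPowConjGrad T m b x r p ρ α β)
    {v : E} (hv : ∀ j < k, ⟪v, p j⟫ = 0) : ∀ j < k, ⟪v, r j⟫ = 0 := by
  intro j hj
  cases j with
  | zero => rw [← h.direction_zero, hv 0 hj]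
  | succ j =>
    rw [eq_sub_of_add_eq (h.direction_succ j).symm, inner_sub_right, real_inner_smul_right,
      hv _ hj, hv j (Nat.lt_of_succ_lt hj), mul_zero, sub_zero]

theorem inner_pow_succ_direction_succ_eq_zero (h : IsPowConjGrad T m b x r p ρ α β)
    (hT : T.IsPositive) (hxstar : T xstar = b) (hk : r k ≠ 0) (hα : ∀ j ≤ k, α j ≠ 0)
    (horth : ∀ j < k, ⟪(T ^ m) (r k), p j⟫ = 0)
    (hconj : ∀ j < k, ⟪(T ^ (m + 1)) (p k), p j⟫ = 0) :
    ∀ j < k + 1, ⟪(T ^ (m + 1)) (p (k + 1)), p j⟫ = 0 := by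
  intro j hj
  have horth_succ : ∀ i < k + 1, ⟪(T ^ m) (r (k + 1)), r i⟫ = 0 :=
    h.inner_residual_eq_zero_of_inner_direction_eq_zero
      (h.inner_pow_residual_succ_direction_eq_zero hT hxstar hk horth hconj)
  have hmul_residual : α j * ⟪(T ^ (m + 1)) (r (k + 1)), p j⟫ =
      -⟪(T ^ m) (r (k + 1)), r (j + 1)⟫ := by
    rw [h.residual_succ j, inner_sub_right, real_inner_smul_right, horth_succ j hj, pow_succ',
      Module.End.mul_apply, hT.isSymmetric, zero_sub, neg_neg]
  refine (mul_eq_zero.mp ?_).resolve_left (hα j (Nat.lt_succ_iff.mp hj))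
  rw [h.inner_pow_direction_succ, mul_add, hmul_residual]
  rcases Nat.lt_succ_iff_lt_or_eq.mp hj with hj | rfl
  · rw [horth_succ _ (Nat.succ_lt_succ hj), hconj j hj, mul_zero, mul_zero, neg_zero, add_zero]
  · rw [mul_left_comm, h.alpha_mul_inner_direction_self hT hxstar hk horth, ← h.rho_eq, h.beta_eq,
      div_mul_cancel₀ _ (h.rho_ne_zero hT hxstar hk), neg_add_cancel]

theorem orthogonal_and_conjugate (h : IsPowConjGrad T m b x r p ρ α β) (hT : T.IsPositive)
    (hxstar : T xstar = b) (hne : ∀ k < ℓ, r k ≠ 0) :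
    ∀ k < ℓ, (∀ j < k, ⟪(T ^ m) (r k), p j⟫ = 0) ∧
      ∀ j < k, ⟪(T ^ (m + 1)) (p k), p j⟫ = 0 := by
  intro k
  induction k using Nat.strong_induction_on with
  | _ k ih =>
    intro hk
    cases k with
    | zero => simp only [Nat.not_lt_zero, IsEmpty.forall_iff, implies_true, and_self]
    | succ k =>
      obtain ⟨horth, hconj⟩ := ih k k.lt_succ_self (Nat.lt_of_succ_lt hk)
      have hr : r k ≠ 0 := hne k (Nat.lt_of_succ_lt hk)
      have hα : ∀ j ≤ k, α j ≠ 0 := by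
        intro j hj
        have hjℓ : j < ℓ := by omega
        refine left_ne_zero_of_mul (b := ⟪(T ^ (m + 1)) (p j), p j⟫) ?_
        rw [h.alpha_mul_inner_direction_self hT hxstar (hne j hjℓ)
          (ih j (Nat.lt_succ_of_le hj) hjℓ).1]
        exact h.rho_ne_zero hT hxstar (hne j hjℓ)
      exact ⟨h.inner_pow_residual_succ_direction_eq_zero hT hxstar hr horth hconj,
        h.inner_pow_succ_direction_succ_eq_zero hT hxstar hr hα horth hconj⟩

theorem inner_pow_succ_direction_direction_nonneg (h : IsPowConjGrad T m b x r p ρ α β)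
    (hT : T.IsPositive) (hxstar : T xstar = b) (hne : ∀ k < ℓ, r k ≠ 0) :
    ∀ i < ℓ, ∀ j < ℓ, 0 ≤ ⟪(T ^ (m + 1)) (p i), p j⟫ := by
  intro i hi j hj
  have hconj := h.orthogonal_and_conjugate hT hxstar hne
  rcases lt_trichotomy i j with hij | rfl | hij
  · rw [hT.isSymmetric.pow, real_inner_comm, (hconj j hj).2 i hij]
  · exact (isPositive_pow hT _).inner_nonneg_left _
  · exact ((hconj i hi).2 j hij).ge

theorem inner_pow_residual_nonneg_of_succ (h : IsPowConjGrad T m b x r p ρ α β)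
    (hT : T.IsPositive) (hfin : r ℓ = 0) {s : ℕ} {v : E}
    (hv : ∀ i < ℓ, 0 ≤ ⟪(T ^ (s + 1)) (p i), v⟫) : ∀ i ≤ ℓ, 0 ≤ ⟪(T ^ s) (r i), v⟫ := by
  intro i hi
  induction hi using Nat.decreasingInduction with
  | self => rw [hfin, map_zero, inner_zero_left]
  | of_succ k hk ih =>
    rw [h.inner_pow_residual_succ, sub_nonneg] at ih
    exact (mul_nonneg (h.alpha_nonneg hT k) (hv k hk)).trans ih

theorem inner_pow_direction_nonneg_of_residual (h : IsPowConjGrad T m b x r p ρ α β)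
    (hT : T.IsPositive) {s : ℕ} {v : E} (hv : ∀ i ≤ ℓ, 0 ≤ ⟪(T ^ s) (r i), v⟫) :
    ∀ i ≤ ℓ, 0 ≤ ⟪(T ^ s) (p i), v⟫ := by
  intro i hi
  induction i with
  | zero => simpa only [h.direction_zero] using hv 0 hi
  | succ k ih =>
    rw [h.inner_pow_direction_succ]
    exact add_nonneg (hv _ hi) (mul_nonneg (h.beta_nonneg hT k) (ih (Nat.le_of_succ_le hi)))

theorem inner_pow_direction_direction_nonneg (h : IsPowConjGrad T m b x r p ρ α β)
    (hT : T.IsPositive) (hxstar : T xstar = b) (hne : ∀ k < ℓ, r k ≠ 0) (hfin : r ℓ = 0)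
    {s : ℕ} (hs : s ≤ m + 1) : ∀ i < ℓ, ∀ j < ℓ, 0 ≤ ⟪(T ^ s) (p i), p j⟫ := by
  induction hs using Nat.decreasingInduction with
  | self => exact h.inner_pow_succ_direction_direction_nonneg hT hxstar hne
  | of_succ s _ ih =>
    intro i hi j hj
    exact h.inner_pow_direction_nonneg_of_residual hT
      (h.inner_pow_residual_nonneg_of_succ hT hfin fun i hi ↦ ih i hi j hj) i hi.le

theorem inner_pow_residual_direction_nonneg (h : IsPowConjGrad T m b x r p ρ α β)
    (hT : T.IsPositive) (hxstar : T xstar = b) (hne : ∀ k < ℓ, r k ≠ 0) (hfin : r ℓ = 0)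
    {s : ℕ} (hs : s ≤ m) {i j : ℕ} (hi : i ≤ ℓ) (hj : j < ℓ) :
    0 ≤ ⟪(T ^ s) (r i), p j⟫ :=
  h.inner_pow_residual_nonneg_of_succ hT hfin
    (fun i hi ↦ h.inner_pow_direction_direction_nonneg hT hxstar hne hfin
      (Nat.succ_le_succ hs) i hi j hj) i hi

theorem energy_error_succ_le (h : IsPowConjGrad T m b x r p ρ α β) (hT : T.IsPositive)
    (hxstar : T xstar = b) (hne : ∀ k < ℓ, r k ≠ 0) (hfin : r ℓ = 0) (hk : k < ℓ) :
    ⟪T (xstar - x (k + 1)), xstar - x (k + 1)⟫ ≤ ⟪T (xstar - x k), xstar - x k⟫ := by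
  have herror : xstar - x k = (xstar - x (k + 1)) + α k • p k := by
    rw [h.iterate_succ]; abel
  have hcross : 0 ≤ ⟪T (xstar - x (k + 1)), α k • p k⟫ := by
    rw [← h.residual_eq hxstar, real_inner_smul_right]
    exact mul_nonneg (h.alpha_nonneg hT k)
      (h.inner_pow_residual_direction_nonneg hT hxstar hne hfin (Nat.zero_le m) hk hk)
  rw [herror]
  exact inner_apply_self_le_inner_apply_add_self hT hcross

theorem norm_residual_succ_le (h : IsPowConjGrad T m b x r p ρ α β) (hT : T.IsPositive)
    (hm : 1 ≤ m) (hxstar : T xstar = b) (hne : ∀ k < ℓ, r k ≠ 0) (hfin : r ℓ = 0)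
    (hk : k < ℓ) : ‖r (k + 1)‖ ≤ ‖r k‖ := by
  have hresidual : r k = r (k + 1) + α k • T (p k) := by
    rw [h.residual_succ, sub_add_cancel]
  have hcross : 0 ≤ ⟪r (k + 1), α k • T (p k)⟫ := by
    rw [real_inner_smul_right, ← hT.isSymmetric]
    exact mul_nonneg (h.alpha_nonneg hT k) <| by
      simpa only [pow_one] using
        h.inner_pow_residual_direction_nonneg hT hxstar hne hfin hm hk hk
  rw [← sq_le_sq₀ (norm_nonneg _) (norm_nonneg _), ← real_inner_self_eq_norm_sq,
    ← real_inner_self_eq_norm_sq, hresidual]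
  exact inner_apply_self_le_inner_apply_add_self LinearMap.isPositive_one hcross

end IsPowConjGrad

theorem car_energy_and_residual_norms_monotone_general {T : E →ₗ[ℝ] E} (hT : T.IsPositive)
    {m : ℕ} (hm : 1 ≤ m) {b xstar : E} (hxstar : T xstar = b) {x r p : ℕ → E} {ρ α β : ℕ → ℝ}
    (h : IsPowConjGrad T m b x r p ρ α β) {ℓ : ℕ} (hne : ∀ k < ℓ, r k ≠ 0) (hfin : r ℓ = 0) :
    ∀ k, 1 ≤ k → k ≤ ℓ →
      ⟪T (xstar - x k), xstar - x k⟫ ≤ ⟪T (xstar - x (k - 1)), xstar - x (k - 1)⟫ ∧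
        ‖r k‖ ≤ ‖r (k - 1)‖ := by
  rintro (_ | k) hk hkℓ
  · exact absurd hk (by norm_num)
  · exact ⟨h.energy_error_succ_le hT hxstar hne hfin hkℓ,
      h.norm_residual_succ_le hT hm hxstar hne hfin hkℓ⟩

end PowConjGrad

theorem inner_toEuclideanLin_apply {ι : Type*} [Fintype ι] [DecidableEq ι] (A : Matrix ι ι ℝ)
    (u v : EuclideanSpace ℝ ι) : inner ℝ (A.toEuclideanLin u) v = v ⬝ᵥ A *ᵥ u :=
  rfl

theorem isPowConjGrad_three_toEuclideanLin {ι : Type*} [Fintype ι] [DecidableEq ι]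
    {A : Matrix ι ι ℝ} (hA : A.IsHermitian) {b : EuclideanSpace ℝ ι}
    {x r p : ℕ → EuclideanSpace ℝ ι} {ρ α β : ℕ → ℝ}
    (hx0 : x 0 = 0) (hr0 : r 0 = b) (hp0 : p 0 = b)
    (hρ : ∀ k, ρ k = r k ⬝ᵥ (A ^ 3).mulVec (r k))
    (hα : ∀ k, α k = ρ k / ((A ^ 2).mulVec (p k) ⬝ᵥ (A ^ 2).mulVec (p k)))
    (hx : ∀ k, x (k + 1) = x k + α k • p k)
    (hr : ∀ k, r (k + 1) = r k - α k • (EuclideanSpace.equiv ι ℝ).symm (A.mulVec (p k)))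
    (hβ : ∀ k, β k = ρ (k + 1) / ρ k)
    (hp : ∀ k, p (k + 1) = r (k + 1) + β k • p k) :
    IsPowConjGrad A.toEuclideanLin 3 b x r p ρ α β where
  residual_zero := by rw [hr0, hx0, map_zero, sub_zero]
  direction_zero := hp0.trans hr0.symm
  rho_eq k := by rw [hρ, ← toLpLin_pow, inner_toEuclideanLin_apply]
  alpha_eq k := by
    have hsymm : (A.toEuclideanLin ^ 2).IsSymmetric :=
      (isSymmetric_toEuclideanLin_iff.mpr hA).pow 2
    rw [hα, pow_add _ 2 2, Module.End.mul_apply, hsymm, ← toLpLin_pow, inner_toEuclideanLin_apply]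
    rfl
  iterate_succ := hx
  residual_succ := hr
  beta_eq := hβ
  direction_succ := hp

/-- Paper: Theorem 6.4 (last two items).  For the cAr (equivalently MinAres) iteration on
an SPD system `A x = b` with exact solution `x* = A⁻¹ b`, the energy-norm errors
`‖x* − x_k‖_A` (i.e. `(x* − x_k)ᵀ A (x* − x_k)`) decrease monotonically and the residual
norms `‖r_k‖` decrease monotonically. -/
theorem car_energy_and_residual_norms_monotone (n ℓ : ℕ) (hℓn : ℓ ≤ n)
    (A : Matrix (Fin n) (Fin n) ℝ) (hA : A.PosDef) (b : EuclideanSpace ℝ (Fin n))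
    (x r p : ℕ → EuclideanSpace ℝ (Fin n)) (ρ α β : ℕ → ℝ)
    (xstar : EuclideanSpace ℝ (Fin n)) (hxstar : xstar = A⁻¹.mulVec b)
    (hx0 : x 0 = 0) (hr0 : r 0 = b) (hp0 : p 0 = b)
    (hρ : ∀ k, ρ k = r k ⬝ᵥ (A ^ 3).mulVec (r k))
    (hα : ∀ k, α k = ρ k / ((A ^ 2).mulVec (p k) ⬝ᵥ (A ^ 2).mulVec (p k)))
    (hx : ∀ k, x (k + 1) = x k + α k • p k)
    (hr : ∀ k, r (k + 1)
            = r k - α k • (EuclideanSpace.equiv (Fin n) ℝ).symm (A.mulVec (p k)))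
    (hβ : ∀ k, β k = ρ (k + 1) / ρ k)
    (hp : ∀ k, p (k + 1) = r (k + 1) + β k • p k)
    (hne : ∀ k < ℓ, r k ≠ 0) (hfin : r ℓ = 0) :
    ∀ k, 1 ≤ k → k ≤ ℓ →
      (xstar - x k) ⬝ᵥ A.mulVec (xstar - x k)
          ≤ (xstar - x (k - 1)) ⬝ᵥ A.mulVec (xstar - x (k - 1)) ∧
      ‖r k‖ ≤ ‖r (k - 1)‖ := by
  have hsolution : A.toEuclideanLin xstar = b := by
    rw [toLpLin_apply, hxstar, mulVec_mulVec, mul_nonsing_inv _ hA.det_pos.ne'.isUnit, one_mulVec]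
  exact car_energy_and_residual_norms_monotone_general
    (isPositive_toEuclideanLin_iff.mpr hA.posSemidef) (by norm_num) hsolution
    (isPowConjGrad_three_toEuclideanLin hA.isHermitian hx0 hr0 hp0 hρ hα hx hr hβ hp) hne hfin
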